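/- arXiv:2108.01492 — 5 statements merged into one kernel-verified Lean document; each statement's English description precedes it below -/
import Mathlib

section
/- Let S, R, T be commutative monoids and suppose S is T-dual to R with duality function ψ : S × R → T. Then S and R are both T-reflexive. -/
/-- `S` is `T`-dual to `R` with duality function `ψ`. -/
def IsDuality {S R T : Type*} [AddCommMonoid S] [AddCommMonoid R] [AddCommMonoid T]
    (ψ : S → R → T) : Prop :=
  (∀ x₁ x₂ : S, (∀ y, ψ x₁ y = ψ x₂ y) → x₁ = x₂) ∧
  (∀ h : S → T, ((h 0 = 0 ∧ ∀ a b, h (a + b) = h a + h b) ↔ ∃ y, ∀ x, h x = ψ x y)) ∧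
  (∀ y₁ y₂ : R, (∀ x, ψ x y₁ = ψ x y₂) → y₁ = y₂) ∧
  (∀ g : R → T, ((g 0 = 0 ∧ ∀ a b, g (a + b) = g a + g b) ↔ ∃ x, ∀ y, g y = ψ x y))

/-- The canonical map `L : S → S'' = Hom(Hom(S,T),T)`, `L_x(h) := h(x)`. -/
def evalHom {S T : Type*} [AddCommMonoid S] [AddCommMonoid T] (x : S) :
    (S →+ T) →+ T where
  toFun h := h x
  map_zero' := rfl
  map_add' _ _ := rfl

/-- `S` is `T`-reflexive: `x ↦ L_x` is a bijection from `S` onto `S''`. -/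
def IsReflexive (S T : Type*) [AddCommMonoid S] [AddCommMonoid T] : Prop :=
  Function.Bijective (fun x : S => evalHom (T := T) x)

/-!
For a biadditive pairing `β : S →+ R →+ T`, restricting `L_x : Hom(S, T) → T` along
`β.flip : R → Hom(S, T)` gives back `β x`. If `β.flip` is surjective, restriction along it loses no
information, so `x ↦ L_x` inherits bijectivity from `β`. The transposed pairing handles `R`.
-/

section Pairing

variable {S R T : Type*} [AddCommMonoid S] [AddCommMonoid R] [AddCommMonoid T]

theorem evalHom_comp_flip (β : S →+ R →+ T) (x : S) : (evalHom x).comp β.flip = β x :=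
  rfl

theorem isReflexive_of_bijective_of_surjective_flip {β : S →+ R →+ T}
    (hβ : Function.Bijective β) (hflip : Function.Surjective β.flip) : IsReflexive S T := by
  have restrict_injective :
      Function.Injective fun Φ : (S →+ T) →+ T => Φ.comp β.flip :=
    fun _ _ => (AddMonoidHom.cancel_right hflip).mp
  have restrict_comp_eval :
      (fun Φ : (S →+ T) →+ T => Φ.comp β.flip) ∘ evalHom = β :=
    funext (evalHom_comp_flip β)
  rw [← restrict_comp_eval] at hβ
  exact ⟨hβ.injective.of_comp, hβ.surjective.of_comp_left restrict_injective⟩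

end Pairing

namespace IsDuality

variable {S R T : Type*} [AddCommMonoid S] [AddCommMonoid R] [AddCommMonoid T] {ψ : S → R → T}

theorem symm (hψ : IsDuality ψ) : IsDuality fun y x => ψ x y :=
  let ⟨separates_left, hom_left, separates_right, hom_right⟩ := hψ
  ⟨separates_right, hom_right, separates_left, hom_left⟩

theorem map_zero_left (hψ : IsDuality ψ) (y : R) : ψ 0 y = 0 :=
  ((hψ.2.1 fun x => ψ x y).mpr ⟨y, fun _ => rfl⟩).1

theorem map_add_left (hψ : IsDuality ψ) (x₁ x₂ : S) (y : R) :
    ψ (x₁ + x₂) y = ψ x₁ y + ψ x₂ y :=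
  ((hψ.2.1 fun x => ψ x y).mpr ⟨y, fun _ => rfl⟩).2 x₁ x₂

/-- A duality function, bundled as a biadditive pairing: the curried map `S → Hom(R, T)`. -/
def pairing (hψ : IsDuality ψ) : S →+ R →+ T where
  toFun x :=
    { toFun := ψ x
      map_zero' := hψ.symm.map_zero_left x
      map_add' := fun y₁ y₂ => hψ.symm.map_add_left y₁ y₂ x }
  map_zero' := AddMonoidHom.ext hψ.map_zero_left
  map_add' x₁ x₂ := AddMonoidHom.ext (hψ.map_add_left x₁ x₂)

theorem pairing_flip (hψ : IsDuality ψ) : hψ.pairing.flip = hψ.symm.pairing :=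
  rfl

theorem pairing_bijective (hψ : IsDuality ψ) : Function.Bijective hψ.pairing := by
  have ⟨separates_left, _, _, hom_right⟩ := hψ
  refine ⟨fun x₁ x₂ h => separates_left x₁ x₂ (DFunLike.congr_fun h), fun g => ?_⟩
  obtain ⟨x, hx⟩ := (hom_right g).mp ⟨map_zero g, map_add g⟩
  exact ⟨x, AddMonoidHom.ext fun y => (hx y).symm⟩

theorem isReflexive_left (hψ : IsDuality ψ) : IsReflexive S T := by
  refine isReflexive_of_bijective_of_surjective_flip hψ.pairing_bijective ?_
  rw [pairing_flip]
  exact hψ.symm.pairing_bijective.surjective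

end IsDuality

/-- If `S` is `T`-dual to `R` with duality function `ψ`, then `S` and `R` are both
`T`-reflexive. -/
theorem duality_implies_reflexive {S R T : Type*}
    [AddCommMonoid S] [AddCommMonoid R] [AddCommMonoid T]
    (ψ : S → R → T) (hψ : IsDuality ψ) :
    IsReflexive S T ∧ IsReflexive R T :=
  ⟨hψ.isReflexive_left, hψ.symm.isReflexive_left⟩
end

section
/- Let I be a finite index set, let (S_i)_{i∈I}, (R_i)_{i∈I} and T be commutative monoids, and assume that for each i ∈ I, S_i is T-dual to R_i with duality function ψ_i. Then Π_{i∈I} S_i is T-dual to Π_{i∈I} R_i with duality function Ψ(x,y) := Σ_{i∈I} ψ_i(x_i,y_i). -/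
open Finset

/-!
A duality function is additive in each variable, hence a pairing `S →+ R →+ T`: its first and
fourth conditions say that this map is bijective, its second and third that the flipped map is.
For finite `I`, homomorphisms `(Π i, R i) →+ T` are the same as families of homomorphisms
`R i →+ T`, and under this identification the pairing of the products is the product of the
pairings `S i →+ R i →+ T`, hence bijective; its flip is of the same form.
-/

theorem surjective_iff_forall_additive_iff_exists {S R T : Type*}
    [AddZeroClass S] [AddZeroClass R] [AddCommMonoid T] (B : S →+ R →+ T) :
    Function.Surjective B ↔
      ∀ g : R → T, (g 0 = 0 ∧ ∀ a b, g (a + b) = g a + g b) ↔ ∃ x, ∀ y, g y = B x y := by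
  refine ⟨fun hB g => ⟨fun ⟨g_zero, g_add⟩ => ?_, fun ⟨x, hx⟩ => ?_⟩, fun hB g => ?_⟩
  · obtain ⟨x, hx⟩ := hB { toFun := g, map_zero' := g_zero, map_add' := g_add }
    exact ⟨x, fun y => (DFunLike.congr_fun hx y).symm⟩
  · obtain rfl : g = B x := funext hx
    exact ⟨map_zero _, map_add _⟩
  · obtain ⟨x, hx⟩ := (hB g).1 ⟨map_zero g, map_add g⟩
    exact ⟨x, AddMonoidHom.ext fun y => (hx y).symm⟩

section IsDuality

variable {S R T : Type*} [AddCommMonoid S] [AddCommMonoid R] [AddCommMonoid T]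

theorem isDuality_iff_bijective (B : S →+ R →+ T) :
    IsDuality (fun x y => B x y) ↔ Function.Bijective B ∧ Function.Bijective B.flip := by
  simp only [IsDuality, Function.Bijective, Function.Injective, DFunLike.ext_iff,
    surjective_iff_forall_additive_iff_exists, AddMonoidHom.flip_apply]
  tauto

theorem IsDuality.exists_eq_addMonoidHom {ψ : S → R → T} (hψ : IsDuality ψ) :
    ∃ B : S →+ R →+ T, ψ = fun x y => B x y := by
  obtain ⟨-, hom_left, -, hom_right⟩ := hψ
  have additive_left (y : R) := (hom_left (ψ · y)).2 ⟨y, fun _ => rfl⟩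
  have additive_right (x : S) := (hom_right (ψ x)).2 ⟨x, fun _ => rfl⟩
  exact ⟨{
    toFun x :=
      { toFun := ψ x, map_zero' := (additive_right x).1, map_add' := (additive_right x).2 }
    map_zero' := AddMonoidHom.ext fun y => (additive_left y).1
    map_add' a b := AddMonoidHom.ext fun y => (additive_left y).2 a b }, rfl⟩

end IsDuality

section PiPairing

variable {I : Type*} [Fintype I] {S R : I → Type*} {T : Type*}
  [∀ i, AddZeroClass (S i)] [AddCommMonoid T]

section AddZeroClass

variable [∀ i, AddZeroClass (R i)]

/-- The orthogonal sum of a finite family of additive pairings `S i × R i → T`: the pairing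
`(x, y) ↦ ∑ i, B i (x i) (y i)` between the products, in curried form. -/
def piPairing (B : ∀ i, S i →+ R i →+ T) : (∀ i, S i) →+ (∀ i, R i) →+ T :=
  ∑ i, ((B i).comp (Pi.evalAddMonoidHom S i)).compl₂ (Pi.evalAddMonoidHom R i)

theorem piPairing_apply (B : ∀ i, S i →+ R i →+ T) (x : ∀ i, S i) (y : ∀ i, R i) :
    piPairing B x y = ∑ i, B i (x i) (y i) := by
  simp [piPairing]

theorem flip_piPairing (B : ∀ i, S i →+ R i →+ T) :
    (piPairing B).flip = piPairing fun i => (B i).flip := by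
  ext y x
  simp only [AddMonoidHom.flip_apply, piPairing_apply]

end AddZeroClass

theorem bijective_piPairing [∀ i, AddCommMonoid (R i)] {B : ∀ i, S i →+ R i →+ T}
    (hB : ∀ i, Function.Bijective (B i)) :
    Function.Bijective (piPairing B) := by
  classical
  have factorization :
      ⇑(piPairing B) = (Pi.addMonoidHomAddEquiv R T).symm ∘ Pi.map fun i => ⇑(B i) := by
    ext x y
    simp [piPairing_apply, Pi.addMonoidHomAddEquiv]
  rw [factorization]
  exact (Pi.addMonoidHomAddEquiv R T).symm.bijective.comp (Function.Bijective.piMap hB)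

end PiPairing

/-- Let `I` be a finite index set and assume that `S i` is `T`-dual to `R i` with
duality function `ψ i` for each `i`.  Then `Π i, S i` is `T`-dual to `Π i, R i` with
duality function `Ψ(x,y) := ∑ i, ψ i (x i) (y i)`. -/
theorem duality_of_product_spaces {I : Type*} [Fintype I]
    {S R : I → Type*} {T : Type*}
    [∀ i, AddCommMonoid (S i)] [∀ i, AddCommMonoid (R i)] [AddCommMonoid T]
    (ψ : ∀ i, S i → R i → T) (hψ : ∀ i, IsDuality (ψ i)) :
    IsDuality (fun (x : ∀ i, S i) (y : ∀ i, R i) => ∑ i, ψ i (x i) (y i)) := by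
  choose B hB using fun i => (hψ i).exists_eq_addMonoidHom
  obtain rfl : ψ = fun i x y => B i x y := funext hB
  have bijective (i : I) := (isDuality_iff_bijective (B i)).1 (hψ i)
  simp only [← piPairing_apply, isDuality_iff_bijective, flip_piPairing]
  exact ⟨bijective_piPairing fun i => (bijective i).1, bijective_piPairing fun i => (bijective i).2⟩
end

section
/- Let (S,≤) be a finite lattice with dual lattice (S*,≤), i.e., there is a bijection S ∋ x ↦ x* ∈ S* such that x ≤ y if and only if x* ≥ y* (x,y ∈ S). Let T denote the monoid ({0,1},∨). Then the monoid (S,∨), whose neutral element is the minimal element of S, is T-dual to (S*,∨) with duality function ψ(x,y) := 0 if x ≤ y* and ψ(x,y) := 1 otherwise (x ∈ S, y ∈ S*). -/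
/-!
A monoid homomorphism `(L, ⊔, ⊥) → ({0,1}, ∨)` is determined by its zero set, and the zero sets
are exactly the order ideals of `L`. If `L` satisfies the ascending chain condition, every ideal is
principal, so the homomorphisms are exactly the maps vanishing precisely on some `Iic m`. As
`ψ(x,y) = 0` can be read both as `x ≤ y*` and, dually, as `y ≤ x*`, this applies on both sides.
-/

open Order Set Function

/-- `h` is a monoid homomorphism `(L, ⊔, ⊥) → ({0,1}, ∨)`, with `{0,1}` encoded as `Bool`. These
are the functionals that a duality function has to represent. -/
def IsJoinHom {L : Type*} [SemilatticeSup L] [OrderBot L] (h : L → Bool) : Prop :=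
  h ⊥ = false ∧ ∀ a b, h (a ⊔ b) = (h a || h b)

theorem isJoinHom_iff_isIdeal {L : Type*} [SemilatticeSup L] [OrderBot L] {h : L → Bool} :
    IsJoinHom h ↔ IsIdeal {x | h x = false} := by
  constructor
  · rintro ⟨map_bot, map_sup⟩
    have sup_mem_iff (a b : L) : h (a ⊔ b) = false ↔ h a = false ∧ h b = false := by
      rw [map_sup, Bool.or_eq_false_iff]
    refine ⟨fun b a hab hb => ?_, ⟨⊥, map_bot⟩, fun a ha b hb => ?_⟩
    · exact ((sup_mem_iff a b).1 (by rwa [sup_eq_right.2 hab])).1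
    · exact ⟨a ⊔ b, (sup_mem_iff a b).2 ⟨ha, hb⟩, le_sup_left, le_sup_right⟩
  · intro hI
    refine ⟨hI.toIdeal.bot_mem, fun a b => ?_⟩
    rw [← Bool.not_inj_iff, ← Bool.coe_false_iff_false, Bool.or_eq_false_iff]
    exact hI.toIdeal.sup_mem_iff

theorem isIdeal_iff_exists_eq_Iic {P : Type*} [Preorder P] [WellFoundedGT P] {I : Set P} :
    IsIdeal I ↔ ∃ m, I = Iic m := by
  constructor
  · intro hI
    obtain ⟨m, hm⟩ := exists_maximal_of_wellFoundedGT (· ∈ I) hI.Nonempty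
    have le_m : ∀ x ∈ I, x ≤ m :=
      hI.Directed.is_top_of_is_max hm.prop fun x hx hmx => hm.le_of_ge hx hmx
    exact ⟨m, Subset.antisymm le_m fun x hx => hI.IsLowerSet hx hm.prop⟩
  · rintro ⟨m, rfl⟩
    exact (Ideal.principal m).isIdeal

section Pairing

variable {S R : Type*} {e : R → S} {ψ : S → R → Bool}

theorem eq_of_forall_pairing_eq [PartialOrder S] (he : Surjective e)
    (hψ : ∀ x y, ψ x y = false ↔ x ≤ e y) {x₁ x₂ : S} (h : ∀ y, ψ x₁ y = ψ x₂ y) : x₁ = x₂ :=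
  eq_of_forall_ge_iff <| he.forall.2 fun y => by rw [← hψ, ← hψ, h]

theorem isJoinHom_iff_exists_forall_eq_pairing [SemilatticeSup S] [OrderBot S] [WellFoundedGT S]
    (he : Surjective e) (hψ : ∀ x y, ψ x y = false ↔ x ≤ e y) {h : S → Bool} :
    IsJoinHom h ↔ ∃ y, ∀ x, h x = ψ x y := by
  have eq_pairing_iff (y : R) : {x | h x = false} = Iic (e y) ↔ ∀ x, h x = ψ x y := by
    simp only [Set.ext_iff, mem_ofPred_eq, mem_Iic, ← hψ, Bool.coe_false_iff_false,
      Bool.not_inj_iff]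
  rw [isJoinHom_iff_isIdeal, isIdeal_iff_exists_eq_Iic, he.exists]
  exact exists_congr eq_pairing_iff

end Pairing

theorem lattice_duality_general {S S' : Type*} [SemilatticeSup S] [SemilatticeSup S']
    [OrderBot S] [OrderBot S'] [WellFoundedGT S] [WellFoundedGT S']
    (d : S ≃ S') (hd : ∀ x y : S, x ≤ y ↔ d y ≤ d x)
    (ψ : S → S' → Bool) (hψ : ∀ (x : S) (y : S'), ψ x y = false ↔ x ≤ d.symm y) :
    (∀ x₁ x₂ : S, (∀ y, ψ x₁ y = ψ x₂ y) → x₁ = x₂) ∧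
    (∀ h : S → Bool, IsJoinHom h ↔ ∃ y, ∀ x, h x = ψ x y) ∧
    (∀ y₁ y₂ : S', (∀ x, ψ x y₁ = ψ x y₂) → y₁ = y₂) ∧
    (∀ g : S' → Bool, IsJoinHom g ↔ ∃ x, ∀ y, g y = ψ x y) := by
  have hψ_dual (y : S') (x : S) : flip ψ y x = false ↔ y ≤ d x := by
    rw [flip, hψ, hd, d.apply_symm_apply]
  exact ⟨fun _ _ => eq_of_forall_pairing_eq d.symm.surjective hψ,
    fun _ => isJoinHom_iff_exists_forall_eq_pairing d.symm.surjective hψ,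
    fun _ _ => eq_of_forall_pairing_eq d.surjective hψ_dual,
    fun _ => isJoinHom_iff_exists_forall_eq_pairing d.surjective hψ_dual⟩

/-- Let `(S,≤)` be a finite lattice with dual lattice `(S*,≤)`, i.e. there is a
bijection `d : S ≃ S*` with `x ≤ y ↔ d y ≤ d x`.  Let `T = ({0,1},∨)`, realised as
`Bool` with `||` and neutral element `false`.  Define `ψ : S × S* → T` by
`ψ(x,y) = 0` if `x ≤ y*` (i.e. `x ≤ d⁻¹ y`) and `ψ(x,y) = 1` otherwise.  Then the
monoid `(S,∨)` (neutral element the minimal element `⊥`) is `T`-dual to `(S*,∨)` with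
duality function `ψ`:
(i) the maps `ψ(·,y)` separate points of `S`;
(ii) the monoid homomorphisms `(S,∨,⊥) → (Bool,∨,false)` are exactly the `ψ(·,y)`;
(iii) the maps `ψ(x,·)` separate points of `S*`;
(iv) the monoid homomorphisms `(S*,∨,⊥) → (Bool,∨,false)` are exactly the `ψ(x,·)`. -/
theorem lattice_duality {S S' : Type*} [Lattice S] [Lattice S']
    [OrderBot S] [OrderBot S'] [Finite S] [Finite S']
    (d : S ≃ S') (hd : ∀ x y : S, x ≤ y ↔ d y ≤ d x)
    (ψ : S → S' → Bool) (hψ : ∀ (x : S) (y : S'), ψ x y = false ↔ x ≤ d.symm y) :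
    (∀ x₁ x₂ : S, (∀ y, ψ x₁ y = ψ x₂ y) → x₁ = x₂) ∧
    (∀ h : S → Bool,
      ((h ⊥ = false ∧ ∀ a b, h (a ⊔ b) = (h a || h b)) ↔ ∃ y, ∀ x, h x = ψ x y)) ∧
    (∀ y₁ y₂ : S', (∀ x, ψ x y₁ = ψ x y₂) → y₁ = y₂) ∧
    (∀ g : S' → Bool,
      ((g ⊥ = false ∧ ∀ a b, g (a ⊔ b) = (g a || g b)) ↔ ∃ x, ∀ y, g y = ψ x y)) :=
  lattice_duality_general d hd ψ hψ
end

section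
/- Let Λ be a finite set and define ψ_add : {0,1}^Λ × {0,1}^Λ → {0,1} by ψ_add(x,y) := ⋁_{i∈Λ} x(i)·y(i). Then a map m : {0,1}^Λ → {0,1}^Λ has a dual map n : {0,1}^Λ → {0,1}^Λ with respect to ψ_add (i.e., ψ_add(m(x),y) = ψ_add(x,n(y)) for all x,y) if and only if m is additive, meaning m(0̲) = 0̲ and m(x∨y) = m(x)∨m(y) for all x,y ∈ {0,1}^Λ. -/
open Finset

/-!
Two vectors of `{0,1}^Λ` pair to `0` exactly when they are disjoint, i.e. when one lies below the
complement of the other. Hence `n` is dual to `m` if and only if `y ↦ (n yᶜ)ᶜ` is the upper adjoint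
of `m`, and on a finite lattice the maps with an upper adjoint are those preserving finite joins.
-/

section GaloisConnection

variable {α β : Type*} [SemilatticeSup α] [OrderBot α] [SemilatticeSup β] [OrderBot β]

theorem exists_galoisConnection_of_map_bot_of_map_sup [Finite α] {m : α → β}
    (map_bot : m ⊥ = ⊥) (map_sup : ∀ x y, m (x ⊔ y) = m x ⊔ m y) :
    ∃ u, GaloisConnection m u := by
  classical
  have := Fintype.ofFinite α
  let f : SupBotHom α β := ⟨⟨m, map_sup⟩, map_bot⟩
  refine ⟨fun y ↦ ({x | m x ≤ y} : Finset α).sup id, fun x y ↦ ⟨fun hx ↦ ?_, fun hx ↦ ?_⟩⟩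
  · exact le_sup (f := id) (mem_filter.mpr ⟨mem_univ x, hx⟩)
  · calc
      m x ≤ m (({x | m x ≤ y} : Finset α).sup id) := OrderHomClass.mono f hx
      _ = ({x | m x ≤ y} : Finset α).sup m := map_finset_sup f _ id
      _ ≤ y := Finset.sup_le fun _ hz ↦ (mem_filter.mp hz).2

theorem exists_galoisConnection_iff [Finite α] {m : α → β} :
    (∃ u, GaloisConnection m u) ↔ m ⊥ = ⊥ ∧ ∀ x y, m (x ⊔ y) = m x ⊔ m y :=
  ⟨fun ⟨_, gc⟩ ↦ ⟨gc.l_bot, fun _ _ ↦ gc.l_sup⟩,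
    fun ⟨map_bot, map_sup⟩ ↦ exists_galoisConnection_of_map_bot_of_map_sup map_bot map_sup⟩

end GaloisConnection

/-- Conjugate maps in the sense of Jónsson and Tarski. On `{0,1}^Λ` this is duality with respect to
`ψ_add`, with disjointness of `x` and `y` encoding `ψ_add(x,y) = 0`. -/
def IsConjugate {α β : Type*} [PartialOrder α] [OrderBot α] [PartialOrder β] [OrderBot β]
    (m : α → β) (n : β → α) : Prop :=
  ∀ x y, Disjoint (m x) y ↔ Disjoint x (n y)

section BooleanAlgebra

variable {α β : Type*} [BooleanAlgebra α] [BooleanAlgebra β]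

theorem isConjugate_iff_galoisConnection {m : α → β} {n : β → α} :
    IsConjugate m n ↔ GaloisConnection m fun y ↦ (n yᶜ)ᶜ := by
  simp only [IsConjugate, GaloisConnection, le_compl_iff_disjoint_right]
  refine forall_congr' fun x ↦ compl_surjective.forall.trans ?_
  simp only [disjoint_compl_right_iff]

theorem exists_isConjugate_iff_exists_galoisConnection {m : α → β} :
    (∃ n, IsConjugate m n) ↔ ∃ u, GaloisConnection m u := by
  simp only [isConjugate_iff_galoisConnection]
  refine ⟨fun ⟨n, gc⟩ ↦ ⟨_, gc⟩, fun ⟨u, gc⟩ ↦ ⟨fun y ↦ (u yᶜ)ᶜ, ?_⟩⟩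
  simpa only [compl_compl] using gc

theorem additive_duality_general [Finite α] (m : α → β) :
    (∃ n, IsConjugate m n) ↔ m ⊥ = ⊥ ∧ ∀ x y, m (x ⊔ y) = m x ⊔ m y :=
  exists_isConjugate_iff_exists_galoisConnection.trans exists_galoisConnection_iff

end BooleanAlgebra

theorem univ_sup_inf_eq_bot_iff_disjoint {ι α : Type*} [Fintype ι] [Lattice α] [OrderBot α]
    {x y : ι → α} : (univ.sup fun i ↦ x i ⊓ y i) = ⊥ ↔ Disjoint x y := by
  simp only [Finset.sup_eq_bot_iff, mem_univ, true_imp_iff, ← disjoint_iff, Pi.disjoint_iff]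

theorem eq_iff_eq_bot_iff_eq_bot {α : Type*} [PartialOrder α] [BoundedOrder α] [IsSimpleOrder α]
    {a b : α} : a = b ↔ (a = ⊥ ↔ b = ⊥) := by
  rcases eq_bot_or_eq_top a with rfl | rfl <;> rcases eq_bot_or_eq_top b with rfl | rfl <;> simp

theorem univ_sup_and_eq_univ_sup_and_iff {ι κ : Type*} [Fintype ι] [Fintype κ]
    {x y : ι → Bool} {z w : κ → Bool} :
    ((univ.sup fun i ↦ x i && y i) = univ.sup fun k ↦ z k && w k) ↔
      (Disjoint x y ↔ Disjoint z w) :=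
  eq_iff_eq_bot_iff_eq_bot.trans <|
    iff_congr univ_sup_inf_eq_bot_iff_disjoint univ_sup_inf_eq_bot_iff_disjoint

/-- Additive duality: with `{0,1}` realised as `Bool` (`0 = false`, `1 = true`,
`∨ = ||`, product `= &&`) and `ψ_add(x,y) := ⋁_{i∈Λ} x(i)·y(i)`, a map
`m : {0,1}^Λ → {0,1}^Λ` has a dual map `n` with respect to `ψ_add` (i.e.
`ψ_add(m(x),y) = ψ_add(x,n(y))` for all `x,y`) if and only if `m` is additive, i.e.
`m(0̲) = 0̲` and `m(x ∨ y) = m(x) ∨ m(y)`. -/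
theorem additive_duality {Λ : Type*} [Fintype Λ]
    (m : (Λ → Bool) → (Λ → Bool)) :
    (∃ n : (Λ → Bool) → (Λ → Bool),
        ∀ x y : Λ → Bool,
          (univ.sup fun i => m x i && y i) = univ.sup fun i => x i && n y i) ↔
      (m (fun _ => false) = (fun _ => false) ∧
        ∀ x y : Λ → Bool, m (fun i => x i || y i) = fun i => m x i || m y i) := by
  simp only [univ_sup_and_eq_univ_sup_and_iff]
  exact additive_duality_general m
end

section
/- Let S, R, T be commutative monoids with S finite, let f : R → Hom(S,T) be a monoid isomorphism (Hom(S,T) carrying pointwise addition), and suppose S and Hom(R,T) have the same (finite) cardinality. Define ψ : S × R → T by ψ(x,y) := f(y)(x). Then S is T-dual to R with duality function ψ if and only if the map S → (R → T), x ↦ ψ(x,·), is injective, i.e., the functions ψ(x,·) for x ∈ S are pairwise distinct. -/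
/- Currying a biadditive pairing `b` gives two maps, `S → Hom(R,T)` and `R → Hom(S,T)`, and duality
says precisely that both are bijective. For `ψ(x,y) = f(y)(x)` the second map is the bijection `f`,
and the first runs between finite sets of equal cardinality. -/

open Function

section HomFamily

variable {ι A B : Type*} [AddZeroClass A] [AddZeroClass B]

theorem map_zero_and_map_add_iff_exists_addMonoidHom (h : A → B) :
    (h 0 = 0 ∧ ∀ a b, h (a + b) = h a + h b) ↔ ∃ φ : A →+ B, ⇑φ = h := by
  constructor
  · rintro ⟨h_zero, h_add⟩
    exact ⟨⟨⟨h, h_zero⟩, h_add⟩, rfl⟩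
  · rintro ⟨φ, rfl⟩
    exact ⟨map_zero φ, map_add φ⟩

theorem forall_map_zero_and_map_add_iff_exists_eq_iff_surjective (F : ι → A →+ B) :
    (∀ h : A → B, (h 0 = 0 ∧ ∀ a b, h (a + b) = h a + h b) ↔ ∃ i, ∀ a, h a = F i a) ↔
      Surjective F := by
  simp only [map_zero_and_map_add_iff_exists_addMonoidHom]
  constructor
  · intro hF φ
    obtain ⟨i, hi⟩ := (hF φ).1 ⟨φ, rfl⟩
    exact ⟨i, DFunLike.ext _ _ fun a => (hi a).symm⟩
  · intro hF h
    constructor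
    · rintro ⟨φ, rfl⟩
      obtain ⟨i, rfl⟩ := hF φ
      exact ⟨i, fun _ => rfl⟩
    · rintro ⟨i, hi⟩
      exact ⟨F i, funext fun a => (hi a).symm⟩

end HomFamily

theorem isDuality_iff_bijective_and_bijective_flip {S R T : Type*}
    [AddCommMonoid S] [AddCommMonoid R] [AddCommMonoid T] (b : S →+ R →+ T) :
    IsDuality (fun x y => b x y) ↔ Bijective b ∧ Bijective b.flip := by
  have h_surj := forall_map_zero_and_map_add_iff_exists_eq_iff_surjective b
  have h_flip_surj := forall_map_zero_and_map_add_iff_exists_eq_iff_surjective b.flip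
  simp only [AddMonoidHom.flip_apply] at h_flip_surj
  simp only [IsDuality, h_surj, h_flip_surj, Bijective, Injective, DFunLike.ext_iff,
    AddMonoidHom.flip_apply]
  tauto

theorem bijective_iff_injective_of_natCard_eq {α β : Type*} [Finite α] [Nonempty α]
    (hcard : Nat.card α = Nat.card β) (g : α → β) : Bijective g ↔ Injective g := by
  have : Finite β := Nat.finite_of_card_ne_zero (hcard ▸ Nat.card_pos.ne')
  rw [Nat.bijective_iff_injective_and_card, and_iff_left hcard]

/-- Let `S, R, T` be commutative monoids with `S` finite, let `f : R ≃+ Hom(S,T)` be a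
monoid isomorphism (`Hom(S,T)` carrying pointwise addition), and suppose `S` and
`Hom(R,T)` have the same (finite) cardinality.  Define `ψ(x,y) := f(y)(x)`.  Then `S`
is `T`-dual to `R` with duality function `ψ` if and only if the map
`x ↦ ψ(x,·) : S → (R → T)` is injective, i.e. the functions `ψ(x,·)`, `x ∈ S`, are
pairwise distinct. -/
theorem duality_iff_injective {S R T : Type*}
    [AddCommMonoid S] [AddCommMonoid R] [AddCommMonoid T] [Finite S]
    (f : R ≃+ (S →+ T)) (hcard : Nat.card S = Nat.card (R →+ T)) :
    IsDuality (fun (x : S) (y : R) => f y x) ↔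
      Function.Injective (fun (x : S) => fun (y : R) => f y x) := by
  let b : S →+ R →+ T := f.toAddMonoidHom.flip
  have h_flip : Bijective b.flip := f.bijective
  calc IsDuality (fun x y => b x y)
    _ ↔ Bijective b := by
      rw [isDuality_iff_bijective_and_bijective_flip, and_iff_left h_flip]
    _ ↔ Injective b := bijective_iff_injective_of_natCard_eq hcard b
    _ ↔ Injective fun x y => b x y := (DFunLike.coe_injective.of_comp_iff b).symm
end
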